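/- arXiv:0708.4400 — 2 statements merged into one kernel-verified Lean document; each statement's English description precedes it below -/
import Mathlib

section
/- Let n ≥ 1 and let u be a word over A with |s_n| ≤ |u| < |s_{n+1}| such that u·u is a factor of 𝐬. Then for every i with 1 ≤ i ≤ k-1 and i ≤ n, no element of Ω_{n+1-i}^1 (the singular (n+1-i)-words of the first kind) is a factor of u. -/
/-!
Let `ψ_e` be the morphism fixing `e` and sending `x ≠ e` to `e x`. The infinite word is the
standard episturmian word with directive word `a_1^{d_1} a_2^{d_2} ⋯` (letters read cyclically):
if `v_n = a_1^{d_1} ⋯ a_n^{d_n}`, then `s_n` is the image of `a_{n+1}` under the composite `Psi v_n`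
(`s_eq`), and `D_{m-1}` is the palindromic prefix `Pal v'`, where `v_m = v' a_m` (`D_eq`).

Put `m = n + 1 - i` and `c = a_m`. Since `D_{m-1} c` is a prefix of `s_m` (`D_prefix`, which needs
the length bound `Pal_length`), every singular `m`-word of the first kind contains `c D_{m-1} c`
(`Om_center`). It remains to see that two occurrences of this word are far apart. Undoing the
morphisms `ψ_e` one at a time turns an occurrence of `c Pal(v') c` in `Psi v' t` into an
occurrence of `c c` in `t`. One further step, through `ψ_c`, turns it into an occurrence of `c`,
and this remains an occurrence of `c` through the next `k - 1` groups of morphisms, whose letters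
differ from `c` (`Psi_mark`). Hence two distinct occurrences are at distance at least the length
of the image of `c = a_{m+k}` under `Psi v_{m+k-1}`, which is `|s_{m+k-1}| ≥ |s_{n+1}|`
(`Psi_dist`). In a square `u u` where `u` contains `c D_{m-1} c`, that word occurs twice at
distance `|u| < |s_{n+1}|`, a contradiction.
-/

namespace Epi

variable {α : Type*}

/-- `pw w p` is the `p`-fold concatenation `w^p`. -/
def pw (w : List α) : ℕ → List α
  | 0 => []
  | p + 1 => w ++ pw w p

/-- `S k a d m` is the word `s_{m-(k-1)}` of the paper (shifted indexing: `m : ℕ`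
ranges over the indices `n ≥ 1-k`). -/
def S (k : ℕ) (a : ℕ → α) (d : ℕ → ℕ) : ℕ → List α
  | m =>
    if h : m < max k 1 then [a ((m + 1) % k + 1)]
    else
      ((List.range (k - 1)).map
          (fun j => pw (S k a d (m - 1 - j)) (d (m + 1 - k - j)))).flatten ++
        S k a d (m - max k 1)
  termination_by m => m
  decreasing_by all_goals omega

/-- `s k a d n` is the word `s_n`, for `n ≥ 0`. -/
def s (k : ℕ) (a : ℕ → α) (d : ℕ → ℕ) (n : ℕ) : List α :=
  S k a d (n + (k - 1))

/-- `D k a d n` is the word `D_n = s_n^{d_{n+1}-1} s_{n-1}^{d_n} ⋯ s_1^{d_2} s_0^{d_1}`. -/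
def D (k : ℕ) (a : ℕ → α) (d : ℕ → ℕ) (n : ℕ) : List α :=
  pw (s k a d n) (d (n + 1) - 1) ++
    ((List.range n).map (fun j => pw (s k a d (n - 1 - j)) (d (n - j)))).flatten

/-- `G k a d n r` is the word `G_{n,r}`: `s_n` with its prefix of length `|D_{n-r}|` removed. -/
def G (k : ℕ) (a : ℕ → α) (d : ℕ → ℕ) (n r : ℕ) : List α :=
  (s k a d n).drop (D k a d (n - r)).length

/-- `Om k a d n r` is the set `Ω_n^r` of singular `n`-words of the `r`-th kind. -/
def Om (k : ℕ) (a : ℕ → α) (d : ℕ → ℕ) (n r : ℕ) : Set (List α) :=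
  { w | w.length = (s k a d n).length ∧
      w <:+:
        ((((G k a d n r).reverse ++ D k a d (n - r) ++ G k a d n r).drop 1).dropLast) }

/-- `w` is a factor of the infinite word `𝐬`. -/
def FactorS (k : ℕ) (a : ℕ → α) (d : ℕ → ℕ) (w : List α) : Prop :=
  ∃ N, w <:+: s k a d N

/-! ### The morphisms of an episturmian word -/

open Classical in
/-- The episturmian morphism `ψ_e`, acting on words: `e ↦ e`, and `x ↦ e x` for `x ≠ e`. -/
noncomputable def psi (e : α) (w : List α) : List α :=
  w.flatMap (fun x => if x = e then [e] else [e, x])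

@[simp] theorem psi_nil (e : α) : psi e [] = [] := rfl

theorem psi_cons_self (e : α) (w : List α) : psi e (e :: w) = e :: psi e w := by
  simp [psi]

theorem psi_cons_ne {e x : α} (h : x ≠ e) (w : List α) : psi e (x :: w) = e :: x :: psi e w := by
  simp [psi, h]

@[simp] theorem psi_append (e : α) (v w : List α) : psi e (v ++ w) = psi e v ++ psi e w := by
  simp [psi]

/-- An image under `ψ_e` is empty or starts with `e`. -/
theorem psi_head {e x : α} {t R : List α} (h : psi e t = x :: R) : x = e := by
  cases t with
  | nil => simp at h
  | cons y t =>
    by_cases hy : y = e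
    · subst hy; rw [psi_cons_self] at h; simp at h; exact h.1.symm
    · rw [psi_cons_ne hy] at h; simp at h; exact h.1.symm

theorem psi_append_head (e : α) (P R : List α) : ∃ Q, psi e P ++ e :: R = e :: Q := by
  cases h : psi e P with
  | nil => exact ⟨R, rfl⟩
  | cons x Q => rw [psi_head h]; exact ⟨_, rfl⟩

theorem psi_inj (e : α) : ∀ v w : List α, psi e v = psi e w → v = w := by
  intro v
  induction v with
  | nil =>
    intro w h
    cases w with
    | nil => rfl
    | cons y w =>
      by_cases hy : y = e
      · subst hy; simp [psi_cons_self] at h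
      · simp [psi_cons_ne hy] at h
  | cons x v ih =>
    intro w h
    cases w with
    | nil =>
      by_cases hx : x = e
      · subst hx; simp [psi_cons_self] at h
      · simp [psi_cons_ne hx] at h
    | cons y w =>
      by_cases hx : x = e <;> by_cases hy : y = e
      · subst hx; subst hy
        simp only [psi_cons_self, List.cons.injEq, true_and] at h
        rw [ih _ h]
      · subst hx
        simp only [psi_cons_self, psi_cons_ne hy, List.cons.injEq, true_and] at h
        exact absurd (psi_head h) hy
      · subst hy
        simp only [psi_cons_self, psi_cons_ne hx, List.cons.injEq, true_and] at h
        exact absurd (psi_head h.symm) hx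
      · simp only [psi_cons_ne hx, psi_cons_ne hy, List.cons.injEq, true_and] at h
        rw [h.1, ih _ h.2]

theorem psi_last {e x : α} {t L : List α} (h : psi e t = L ++ [x]) : ∃ L', t = L' ++ [x] := by
  rcases List.eq_nil_or_concat' t with rfl | ⟨T, z, rfl⟩
  · simp at h
  · refine ⟨T, ?_⟩
    by_cases hz : z = e
    · subst hz
      simp [psi_cons_self, psi_append] at h
      simp [h.2]
    · have h' : (psi e T ++ [e]) ++ [z] = L ++ [x] := by
        rw [← h]; simp [psi_cons_ne hz, psi_append]
      have := (List.append_inj' h' rfl).2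
      simp at this
      simp [this]

/-- A cut in `ψ_e(t)` made just before a letter `e` is a cut between two blocks. -/
theorem psi_cut {e : α} {R : List α} : ∀ {t L : List α}, psi e t = L ++ e :: R →
    ∃ T1 T2, t = T1 ++ T2 ∧ psi e T1 = L ∧ psi e T2 = e :: R := by
  intro t
  induction t with
  | nil => intro L h; simp at h
  | cons y t ih =>
    intro L h
    rcases L with _ | ⟨l, L⟩
    · exact ⟨[], y :: t, rfl, rfl, h⟩
    by_cases hy : y = e
    · subst hy
      simp only [psi_cons_self, List.cons_append, List.cons.injEq] at h
      obtain ⟨T1, T2, rfl, h1, h2⟩ := ih h.2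
      exact ⟨y :: T1, T2, rfl, by rw [psi_cons_self, h1, h.1], h2⟩
    · rw [psi_cons_ne hy] at h
      rcases L with _ | ⟨l', L⟩
      · simp at h; exact absurd h.2.1 hy
      · simp only [List.cons_append, List.cons.injEq] at h
        obtain ⟨T1, T2, rfl, h1, h2⟩ := ih h.2.2
        exact ⟨y :: T1, T2, rfl, by rw [psi_cons_ne hy, h1, h.1, h.2.1], h2⟩

/-- Occurrences of `x ψ_e(P) e y` in `ψ_e(t)` come from occurrences of `x P y` in `t`. -/
theorem psi_desub {e x y : α} {P R t L : List α}
    (h : psi e t = L ++ x :: (psi e P ++ e :: y :: R)) :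
    ∃ L' R', t = L' ++ x :: (P ++ y :: R') ∧ psi e (L' ++ [x]) = L ++ [x] := by
  obtain ⟨Q, hQ⟩ := psi_append_head e P (y :: R)
  have h' : psi e t = (L ++ [x]) ++ e :: Q := by rw [h, hQ]; simp
  obtain ⟨T1, T2, rfl, h1, h2⟩ := psi_cut h'
  obtain ⟨L', rfl⟩ := psi_last h1
  rw [← hQ] at h2
  obtain ⟨T3, T4, rfl, h3, h4⟩ := psi_cut h2
  obtain rfl := psi_inj e _ _ h3
  cases T4 with
  | nil => simp at h4
  | cons z T4 =>
    have hz : z = y := by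
      by_cases hz : z = e
      · subst hz
        simp only [psi_cons_self, List.cons.injEq, true_and] at h4
        exact (psi_head h4).symm
      · simp only [psi_cons_ne hz, List.cons.injEq, true_and] at h4
        exact h4.1
    subst hz
    exact ⟨L', T4, by simp, h1⟩

/-- Occurrences of `c` in `ψ_e(t)`, for `c ≠ e`, come from occurrences of `c` in `t`. -/
theorem psi_desub_ne {e c : α} (hc : c ≠ e) {R : List α} : ∀ {t L : List α},
    psi e t = L ++ c :: R → ∃ L' R', t = L' ++ c :: R' ∧ psi e (L' ++ [c]) = L ++ [c] := by
  intro t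
  induction t with
  | nil => intro L h; simp at h
  | cons y t ih =>
    intro L h
    rcases L with _ | ⟨l, L⟩
    · exact absurd (psi_head h) hc
    by_cases hy : y = e
    · subst hy
      simp only [psi_cons_self, List.cons_append, List.cons.injEq] at h
      obtain ⟨L', R', rfl, h1⟩ := ih h.2
      exact ⟨y :: L', R', rfl, by rw [List.cons_append, psi_cons_self, h1, h.1]; rfl⟩
    · rw [psi_cons_ne hy] at h
      rcases L with _ | ⟨l', L⟩
      · simp at h
        obtain ⟨rfl, rfl, -⟩ := h
        exact ⟨[], t, rfl, by simp [psi_cons_ne hy]⟩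
      · simp only [List.cons_append, List.cons.injEq] at h
        obtain ⟨L', R', rfl, h1⟩ := ih h.2.2
        exact ⟨y :: L', R', rfl, by
          rw [List.cons_append, psi_cons_ne hy, h1, h.1, h.2.1]; rfl⟩

/-- The composite `ψ_{v_1} ∘ ψ_{v_2} ∘ ⋯` along the letters of a directive word `v`. -/
noncomputable def Psi (v w : List α) : List α := v.foldr psi w

@[simp] theorem Psi_nil (w : List α) : Psi [] w = w := rfl

theorem Psi_cons (e : α) (v w : List α) : Psi (e :: v) w = psi e (Psi v w) := rfl

theorem Psi_comp (v v' w : List α) : Psi (v ++ v') w = Psi v (Psi v' w) := by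
  simp [Psi]

@[simp] theorem Psi_nil_right (v : List α) : Psi v [] = [] := by
  induction v with
  | nil => rfl
  | cons e v ih => rw [Psi_cons, ih, psi_nil]

@[simp] theorem Psi_append (v w w' : List α) : Psi v (w ++ w') = Psi v w ++ Psi v w' := by
  induction v with
  | nil => rfl
  | cons e v ih => rw [Psi_cons, Psi_cons, Psi_cons, ih, psi_append]

/-- The palindromic prefix of the episturmian word directed by `v`, built with Justin's formula
`Pal(e v) = ψ_e(Pal(v)) e`. -/
noncomputable def Pal : List α → List α
  | [] => []
  | e :: v => psi e (Pal v) ++ [e]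

theorem Pal_snoc (v : List α) (c : α) : Pal (v ++ [c]) = Psi v [c] ++ Pal v := by
  induction v with
  | nil => simp [Pal]
  | cons e v ih => simp [Pal, ih, Psi_cons]

theorem Pal_prefix_snoc (v : List α) (y : α) : Pal v ++ [y] <+: Pal (v ++ [y]) := by
  induction v with
  | nil => simp [Pal]
  | cons e v ih =>
    obtain ⟨X, hX⟩ := ih
    simp only [Pal, List.cons_append, ← hX, psi_append]
    by_cases hy : y = e
    · subst hy
      obtain ⟨Q, hQ⟩ := psi_append_head y X []
      exact ⟨Q, by simp [psi_cons_self, hQ]⟩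
    · exact ⟨psi e X ++ [e], by simp [psi_cons_ne hy]⟩

theorem Psi_snoc_self (v : List α) (c : α) : Psi (v ++ [c]) [c] = Psi v [c] := by
  rw [Psi_comp, Psi_cons, Psi_nil, psi_cons_self, psi_nil]

theorem Psi_snoc_ne (v : List α) {c x : α} (h : x ≠ c) :
    Psi (v ++ [c]) [x] = Psi v [c] ++ Psi v [x] := by
  rw [Psi_comp, Psi_cons, Psi_nil, psi_cons_ne h, psi_nil, ← Psi_append]; rfl

theorem Psi_replicate_self (v : List α) (c : α) (p : ℕ) :
    Psi (v ++ List.replicate p c) [c] = Psi v [c] := by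
  induction p with
  | zero => simp
  | succ p ih => rw [List.replicate_succ', ← List.append_assoc, Psi_snoc_self, ih]

theorem Psi_replicate_ne (v : List α) {c x : α} (h : x ≠ c) (p : ℕ) :
    Psi (v ++ List.replicate p c) [x] = pw (Psi v [c]) p ++ Psi v [x] := by
  induction p with
  | zero => simp [pw]
  | succ p ih =>
    rw [List.replicate_succ', ← List.append_assoc, Psi_snoc_ne _ h, ih, Psi_replicate_self]
    simp [pw]

theorem Pal_replicate (v : List α) (c : α) (p : ℕ) :
    Pal (v ++ List.replicate p c) = pw (Psi v [c]) p ++ Pal v := by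
  induction p with
  | zero => simp [pw]
  | succ p ih =>
    rw [List.replicate_succ', ← List.append_assoc, Pal_snoc, ih, Psi_replicate_self]
    simp [pw]

/-- A Fine and Wilf type bound, proved by appending letters to `v` with `Pal_snoc`. It is what keeps
`D_q` strictly shorter than `s_{q+1}` in `D_prefix`. -/
theorem Pal_length (v : List α) {x y : α} (h : x ≠ y) :
    (Pal v).length + 2 ≤ (Psi v [x]).length + (Psi v [y]).length := by
  induction v using List.reverseRecOn with
  | nil => simp [Pal]
  | append_singleton v c ih =>
    rw [Pal_snoc, List.length_append]
    by_cases hx : x = c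
    · subst hx
      rw [Psi_snoc_self, Psi_snoc_ne _ (Ne.symm h), List.length_append]
      omega
    · rw [Psi_snoc_ne _ hx, List.length_append]
      by_cases hy : y = c
      · subst hy
        rw [Psi_snoc_self]
        omega
      · rw [Psi_snoc_ne _ hy, List.length_append]
        omega

/-! ### Distance between occurrences of `c Pal(v) c` -/

/-- Occurrences of `x Pal(v) y` in `Psi v t` come from occurrences of `x y` in `t`; iterates
`psi_desub` along Justin's formula for `Pal`. -/
theorem Psi_desub {x y : α} {v : List α} : ∀ {R t L : List α},
    Psi v t = L ++ x :: (Pal v ++ y :: R) →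
    ∃ L' R', t = L' ++ x :: y :: R' ∧ Psi v (L' ++ [x]) = L ++ [x] := by
  induction v with
  | nil => intro R t L h; exact ⟨L, R, by simpa [Pal] using h, rfl⟩
  | cons e v ih =>
    intro R t L h
    rw [Psi_cons] at h
    have h' : psi e (Psi v t) = L ++ x :: (psi e (Pal v) ++ e :: y :: R) := by
      rw [h]; simp [Pal]
    obtain ⟨L1, R1, h1, h2⟩ := psi_desub h'
    obtain ⟨L2, R2, h3, h4⟩ := ih h1
    exact ⟨L2, R2, h3, by rw [Psi_cons, h4, h2]⟩

theorem Psi_desub_ne {c : α} {v : List α} (hc : c ∉ v) : ∀ {R t L : List α},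
    Psi v t = L ++ c :: R →
    ∃ L' R', t = L' ++ c :: R' ∧ Psi v (L' ++ [c]) = L ++ [c] := by
  induction v with
  | nil => intro R t L h; exact ⟨L, R, h, rfl⟩
  | cons e v ih =>
    intro R t L h
    rw [List.mem_cons, not_or] at hc
    rw [Psi_cons] at h
    obtain ⟨L1, R1, h1, h2⟩ := psi_desub_ne hc.1 h
    obtain ⟨L2, R2, h3, h4⟩ := ih hc.2 h1
    exact ⟨L2, R2, h3, by rw [Psi_cons, h4, h2]⟩

/-- In an image under `Psi (v c f)` with `c ∉ f`, the occurrences of `c Pal(v) c` are marked by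
the letters `c` of the preimage. -/
theorem Psi_mark {c : α} {v f : List α} (hc : c ∉ f) {R t L : List α}
    (h : Psi (v ++ c :: f) t = L ++ c :: (Pal v ++ c :: R)) :
    ∃ L' R', t = L' ++ c :: R' ∧ Psi (v ++ c :: f) (L' ++ [c]) = L ++ [c] := by
  rw [Psi_comp] at h
  obtain ⟨L1, R1, h1, h2⟩ := Psi_desub h
  rw [Psi_cons] at h1
  obtain ⟨T1, T2, h3, h4, -⟩ := psi_cut (L := L1 ++ [c]) (R := R1) (by rw [h1]; simp)
  obtain ⟨L2, rfl⟩ := psi_last h4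
  obtain ⟨L3, R3, h5, h6⟩ := Psi_desub_ne hc (R := T2) (L := L2) (t := t) (by rw [h3]; simp)
  exact ⟨L3, R3, h5, by rw [Psi_comp, Psi_cons, h6, h4, h2]⟩

/-- Two distinct occurrences of `c Pal(v) c` in an image under `Psi (v c f)`, where `c ∉ f`, are at
distance at least the length of the image of `c`: what separates them is the image of a nonempty
word ending with `c`. -/
theorem Psi_dist {c : α} {v f : List α} (hc : c ∉ f) {R1 R2 t L1 L2 : List α}
    (h1 : Psi (v ++ c :: f) t = L1 ++ c :: (Pal v ++ c :: R1))
    (h2 : Psi (v ++ c :: f) t = L2 ++ c :: (Pal v ++ c :: R2))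
    (hL : L1.length < L2.length) :
    L1.length + (Psi (v ++ c :: f) [c]).length ≤ L2.length := by
  obtain ⟨A, A', hA, hA'⟩ := Psi_mark hc h1
  obtain ⟨B, B', hB, hB'⟩ := Psi_mark hc h2
  have pA : A ++ [c] <+: t := ⟨A', by rw [hA]; simp⟩
  have pB : B ++ [c] <+: t := ⟨B', by rw [hB]; simp⟩
  have lA := congrArg List.length hA'
  have lB := congrArg List.length hB'
  rcases List.prefix_or_prefix_of_prefix pA pB with ⟨z, hz⟩ | ⟨z, hz⟩
  · rcases List.eq_nil_or_concat' z with rfl | ⟨z, x, rfl⟩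
    · rw [List.append_nil] at hz
      rw [← hz] at lB
      simp only [List.length_append, List.length_singleton] at lA lB
      omega
    · have hx : x = c := by
        have h := hz
        rw [← List.append_assoc] at h
        simpa using (List.append_inj' h rfl).2
      subst hx
      rw [← hz] at lB
      simp only [Psi_append, List.length_append, List.length_singleton] at lA lB ⊢
      omega
  · rw [← hz] at lA
    simp only [Psi_append, List.length_append, List.length_singleton] at lA lB
    omega

/-! ### The words `s_n` and `D_n` in terms of morphisms -/

/-- The letter `a_{i+1}`, with subscripts read cyclically in `{1, …, k}`. -/
def lett (k : ℕ) (a : ℕ → α) (i : ℕ) : α := a (i % k + 1)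

/-- The directive word `a_1^{d_1} a_2^{d_2} ⋯ a_n^{d_n}`, with cyclic letters. -/
def dir (k : ℕ) (a : ℕ → α) (d : ℕ → ℕ) : ℕ → List α
  | 0 => []
  | n + 1 => dir k a d n ++ List.replicate (d (n + 1)) (lett k a n)

theorem lett_ne {k : ℕ} (hk : 2 ≤ k) {a : ℕ → α}
    (ha : ∀ i j, 1 ≤ i → i ≤ k → 1 ≤ j → j ≤ k → a i = a j → i = j)
    {i j : ℕ} (h1 : i < j) (h2 : j < i + k) : lett k a j ≠ lett k a i := by
  intro h
  have hi := Nat.mod_lt i (show 0 < k by omega)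
  have hj := Nat.mod_lt j (show 0 < k by omega)
  have h3 : j % k + 1 = i % k + 1 := ha _ _ (by omega) (by omega) (by omega) (by omega) h
  have h4 : k ∣ j - i := (Nat.modEq_iff_dvd' h1.le).1 (show i % k = j % k by omega)
  have := Nat.le_of_dvd (by omega) h4
  omega

theorem lett_add (k : ℕ) (a : ℕ → α) (i : ℕ) : lett k a (i + k) = lett k a i := by
  simp [lett]

theorem s_eq {k : ℕ} (hk : 2 ≤ k) {a : ℕ → α}
    (ha : ∀ i j, 1 ≤ i → i ≤ k → 1 ≤ j → j ≤ k → a i = a j → i = j)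
    {d : ℕ → ℕ} (hd0 : d 0 = 0) (n : ℕ) :
    s k a d n = Psi (dir k a d n) [lett k a n] := by
  induction n using Nat.strong_induction_on with
  | _ n ih =>
  have hmax : max k 1 = k := by omega
  rcases Nat.eq_zero_or_pos n with rfl | hn
  · rw [s, S, dif_pos (by omega)]
    simp [dir, lett, show k - 1 + 1 = k by omega]
  -- Peel off the powers in `s_n` one at a time; the truncated subtraction is harmless since
  -- `d 0 = 0`.
  have key : ∀ J, J ≤ k - 1 → Psi (dir k a d n) [lett k a n] =
      ((List.range J).map
        (fun j => pw (S k a d (n + (k - 1) - 1 - j)) (d (n + (k - 1) + 1 - k - j)))).flatten ++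
      Psi (dir k a d (n - J)) [lett k a n] := by
    intro J
    induction J with
    | zero => intro _; simp
    | succ J ihJ =>
      intro hJ
      rw [ihJ (by omega), List.range_succ, List.map_append, List.flatten_append, List.append_assoc]
      congr 1
      simp only [List.map_cons, List.map_nil, List.flatten_cons, List.flatten_nil,
        List.append_nil]
      rw [show n + (k - 1) + 1 - k - J = n - J by omega]
      rcases Nat.eq_zero_or_pos (n - J) with h0 | h0
      · simp [h0, show n - (J + 1) = 0 by omega, hd0, pw]
      · obtain ⟨q, hq⟩ : ∃ q, n - J = q + 1 := ⟨n - J - 1, by omega⟩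
        rw [hq, dir, Psi_replicate_ne _ (lett_ne hk ha (by omega) (by omega)),
          ← ih q (by omega), s, show n - (J + 1) = q by omega,
          show n + (k - 1) - 1 - J = q + (k - 1) by omega]
  rw [key (k - 1) le_rfl, s, S, dif_neg (by omega), hmax]
  congr 1
  by_cases hnk : n < k
  · rw [S, dif_pos (by omega), show n - (k - 1) = 0 by omega,
      show n + (k - 1) - k + 1 = n by omega]
    rfl
  · obtain ⟨q, rfl⟩ : ∃ q, n = q + k := ⟨n - k, by omega⟩
    rw [show q + k - (k - 1) = q + 1 by omega, lett_add, dir, Psi_replicate_self,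
      ← ih q (by omega), s, show q + k + (k - 1) - k = q + (k - 1) by omega]

theorem D_eq {k : ℕ} (hk : 2 ≤ k) {a : ℕ → α}
    (ha : ∀ i j, 1 ≤ i → i ≤ k → 1 ≤ j → j ≤ k → a i = a j → i = j)
    {d : ℕ → ℕ} (hd0 : d 0 = 0) (n : ℕ) :
    D k a d n = Pal (dir k a d n ++ List.replicate (d (n + 1) - 1) (lett k a n)) := by
  have key : ∀ n, ((List.range n).map
      (fun j => pw (s k a d (n - 1 - j)) (d (n - j)))).flatten = Pal (dir k a d n) := by
    intro n
    induction n with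
    | zero => simp [dir, Pal]
    | succ n ih =>
      rw [dir, Pal_replicate, ← ih, ← s_eq hk ha hd0, List.range_succ_eq_map, List.map_cons,
        List.flatten_cons, List.map_map]
      congr 2
      refine List.map_congr_left fun j _ => ?_
      simp only [Function.comp, show n + 1 - 1 - (j + 1) = n - 1 - j by omega,
        show n + 1 - (j + 1) = n - j by omega]
  rw [Pal_replicate, ← s_eq hk ha hd0, D, key]

theorem s_prefix_succ {k : ℕ} (hk : 2 ≤ k) {a : ℕ → α}
    (ha : ∀ i j, 1 ≤ i → i ≤ k → 1 ≤ j → j ≤ k → a i = a j → i = j)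
    {d : ℕ → ℕ} (hd0 : d 0 = 0) (hd : ∀ i, 1 ≤ i → 1 ≤ d i) (n : ℕ) :
    s k a d n <+: s k a d (n + 1) := by
  obtain ⟨q, hq⟩ : ∃ q, d (n + 1) = q + 1 := ⟨d (n + 1) - 1, by have := hd (n + 1); omega⟩
  rw [s_eq hk ha hd0 (n + 1), dir,
    Psi_replicate_ne _ (lett_ne hk ha (Nat.lt_succ_self n) (by omega)), ← s_eq hk ha hd0, hq, pw,
    List.append_assoc]
  exact List.prefix_append _ _

theorem s_prefix {k : ℕ} (hk : 2 ≤ k) {a : ℕ → α}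
    (ha : ∀ i j, 1 ≤ i → i ≤ k → 1 ≤ j → j ≤ k → a i = a j → i = j)
    {d : ℕ → ℕ} (hd0 : d 0 = 0) (hd : ∀ i, 1 ≤ i → 1 ≤ d i) {m n : ℕ} (h : m ≤ n) :
    s k a d m <+: s k a d n := by
  induction n, h using Nat.le_induction with
  | base => exact List.prefix_rfl
  | succ n _ ih => exact ih.trans (s_prefix_succ hk ha hd0 hd n)

theorem dir_add (k : ℕ) (a : ℕ → α) (d : ℕ → ℕ) (m j : ℕ) :
    ∃ f, dir k a d (m + j) = dir k a d m ++ f ∧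
      ∀ x ∈ f, ∃ i, m ≤ i ∧ i < m + j ∧ x = lett k a i := by
  induction j with
  | zero => exact ⟨[], by simp, by simp⟩
  | succ j ih =>
    obtain ⟨f, h1, h2⟩ := ih
    refine ⟨f ++ List.replicate (d (m + j + 1)) (lett k a (m + j)), ?_, ?_⟩
    · rw [← Nat.add_assoc, dir, h1, List.append_assoc]
    · intro x hx
      rcases List.mem_append.1 hx with hx | hx
      · obtain ⟨i, h3, h4, h5⟩ := h2 x hx
        exact ⟨i, h3, by omega, h5⟩
      · exact ⟨m + j, by omega, by omega, List.eq_of_mem_replicate hx⟩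

theorem dir_succ {k : ℕ} (a : ℕ → α) {d : ℕ → ℕ} (hd : ∀ i, 1 ≤ i → 1 ≤ d i) (q : ℕ) :
    dir k a d (q + 1) =
      (dir k a d q ++ List.replicate (d (q + 1) - 1) (lett k a q)) ++ [lett k a q] := by
  rw [dir, List.append_assoc, ← List.replicate_succ', Nat.sub_add_cancel (hd _ (by omega))]

/-! ### Singular words of the first kind -/

/-- `D_q a_{q+1}` is a prefix of `s_{q+1}`. -/
theorem D_prefix {k : ℕ} (hk : 2 ≤ k) {a : ℕ → α}
    (ha : ∀ i j, 1 ≤ i → i ≤ k → 1 ≤ j → j ≤ k → a i = a j → i = j)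
    {d : ℕ → ℕ} (hd0 : d 0 = 0) (hd : ∀ i, 1 ≤ i → 1 ≤ d i) (q : ℕ) :
    D k a d q ++ [lett k a q] <+: s k a d (q + 1) := by
  have e1 := dir_succ (k := k) a hd q
  have hne : lett k a (q + 1) ≠ lett k a q := lett_ne hk ha (by omega) (by omega)
  have p1 : D k a d q ++ [lett k a q] <+: Pal (dir k a d (q + 1)) := by
    rw [D_eq hk ha hd0, e1]; exact Pal_prefix_snoc _ _
  have p2 : D k a d q ++ [lett k a q] <+: Pal (dir k a d (q + 1) ++ [lett k a (q + 1)]) :=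
    (p1.trans (List.prefix_append _ _)).trans (Pal_prefix_snoc _ _)
  have p3 : s k a d (q + 1) <+: Pal (dir k a d (q + 1) ++ [lett k a (q + 1)]) := by
    rw [Pal_snoc, ← s_eq hk ha hd0]; exact List.prefix_append _ _
  refine List.prefix_of_prefix_length_le p2 p3 ?_
  have hl := Pal_length (dir k a d (q + 1)) hne
  have hP : Pal (dir k a d (q + 1)) = Psi (dir k a d (q + 1)) [lett k a q] ++ D k a d q := by
    rw [D_eq hk ha hd0, e1, Pal_snoc, Psi_snoc_self]
  rw [hP, ← s_eq hk ha hd0, List.length_append] at hl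
  rw [List.length_append, List.length_singleton]
  omega

/-- A factor of `A C B` that is too long to miss a letter of `C` on either side contains `C`. -/
theorem infix_center {A C B w : List α} (hw : w <:+: A ++ C ++ B)
    (hA : A.length + C.length + B.length ≤ w.length + A.length)
    (hB : A.length + C.length + B.length ≤ w.length + B.length) : C <:+: w := by
  obtain ⟨p, r, h⟩ := hw
  have hl := congrArg List.length h
  simp only [List.length_append] at hl
  have hp : p <+: A := List.prefix_of_prefix_length_le (l₃ := A ++ C ++ B)
    ⟨w ++ r, by rw [← h]; simp⟩ ⟨C ++ B, by simp⟩ (by omega)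
  have hr : r <:+ B := List.suffix_of_suffix_length_le (l₃ := A ++ C ++ B)
    ⟨p ++ w, by rw [← h]⟩ ⟨A ++ C, rfl⟩ (by omega)
  obtain ⟨A', rfl⟩ := hp
  obtain ⟨B', rfl⟩ := hr
  refine ⟨A', B', ?_⟩
  have h' : p ++ (w ++ r) = p ++ ((A' ++ C ++ B') ++ r) := by simpa using h
  exact (List.append_cancel_right (List.append_cancel_left h')).symm

/-- Every singular `(q+1)`-word of the first kind contains `a_{q+1} D_q a_{q+1}`. -/
theorem Om_center {k : ℕ} (hk : 2 ≤ k) {a : ℕ → α}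
    (ha : ∀ i j, 1 ≤ i → i ≤ k → 1 ≤ j → j ≤ k → a i = a j → i = j)
    {d : ℕ → ℕ} (hd0 : d 0 = 0) (hd : ∀ i, 1 ≤ i → 1 ≤ d i) (q : ℕ) {w : List α}
    (hw : w ∈ Om k a d (q + 1) 1) :
    [lett k a q] ++ D k a d q ++ [lett k a q] <:+: w := by
  obtain ⟨hl, hw⟩ := hw
  obtain ⟨G', hG'⟩ := D_prefix hk ha hd0 hd q
  have hG : G k a d (q + 1) 1 = lett k a q :: G' := by
    rw [G, Nat.add_sub_cancel, ← hG']; simp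
  rw [← hG'] at hl
  rw [hG, Nat.add_sub_cancel] at hw
  rcases List.eq_nil_or_concat' G' with rfl | ⟨H, z, rfl⟩
  · -- Here `G` is a single letter, and the trimmed word is too short to have a factor `w`.
    have := hw.length_le
    simp at hl this
    omega
  · have e : (((lett k a q :: (H ++ [z])).reverse ++ D k a d q ++
        lett k a q :: (H ++ [z])).drop 1).dropLast =
        H.reverse ++ ([lett k a q] ++ D k a d q ++ [lett k a q]) ++ H := by
      have : ((lett k a q :: (H ++ [z])).reverse ++ D k a d q ++
          lett k a q :: (H ++ [z])).drop 1 =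
          (H.reverse ++ ([lett k a q] ++ D k a d q ++ [lett k a q]) ++ H) ++ [z] := by simp
      rw [this, List.dropLast_concat]
    rw [e] at hw
    simp only [List.length_append, List.length_singleton] at hl
    refine infix_center hw ?_ ?_ <;>
      simp only [List.length_append, List.length_singleton, List.length_reverse] <;> omega

theorem stmt14 {α : Type*} (k : ℕ) (hk : 2 ≤ k) (a : ℕ → α)
    (ha : ∀ i j, 1 ≤ i → i ≤ k → 1 ≤ j → j ≤ k → a i = a j → i = j)
    (d : ℕ → ℕ) (hd0 : d 0 = 0) (hd : ∀ i, 1 ≤ i → 1 ≤ d i) (n : ℕ) (hn : 1 ≤ n) (u : List α)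
    (h1 : (s k a d n).length ≤ u.length)
    (h2 : u.length < (s k a d (n + 1)).length)
    (hu : FactorS k a d (u ++ u)) :
    ∀ i, 1 ≤ i → i ≤ k - 1 → i ≤ n →
      ∀ w ∈ Om k a d (n + 1 - i) 1, ¬ w <:+: u := by
  intro i hi1 hik hin w hw hwu
  obtain ⟨q, hq⟩ : ∃ q, n + 1 - i = q + 1 := ⟨n - i, by omega⟩
  rw [hq] at hw
  obtain ⟨x, y, hxy⟩ := (Om_center hk ha hd0 hd q hw).trans hwu
  obtain ⟨f, hf1, hf2⟩ := dir_add k a d (q + 1) (k - 1)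
  have hqk : q + 1 + (k - 1) = q + k := by omega
  rw [hqk] at hf1 hf2
  have hcf : lett k a q ∉ f := by
    intro h
    obtain ⟨j, h3, h4, h5⟩ := hf2 _ h
    exact lett_ne hk ha (by omega) h4 h5.symm
  -- The square also occurs in a word `s_M` with `M ≥ q + k`.
  obtain ⟨N, hN⟩ := hu
  obtain ⟨g, hg, -⟩ := dir_add k a d (q + k) N
  have hM : u ++ u <:+: s k a d (q + k + N) :=
    hN.trans (s_prefix hk ha hd0 hd (by omega)).isInfix
  obtain ⟨L, R, hLR⟩ := hM
  have hv : dir k a d (q + k) = (dir k a d q ++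
      List.replicate (d (q + 1) - 1) (lett k a q)) ++ lett k a q :: f := by
    rw [hf1, dir_succ a hd]; simp
  rw [s_eq hk ha hd0, hg, Psi_comp, hv] at hLR
  rw [D_eq hk ha hd0] at hxy
  have hdist := Psi_dist hcf (L1 := L ++ x) (L2 := L ++ u ++ x) (R1 := y ++ u ++ R)
    (R2 := y ++ R) (by rw [← hLR, ← hxy]; simp) (by rw [← hLR, ← hxy]; simp) (by
      have := congrArg List.length hxy
      simp only [List.length_append, List.length_singleton] at this ⊢
      omega)
  rw [← hv, ← lett_add, ← s_eq hk ha hd0] at hdist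
  have hmono := (s_prefix hk ha hd0 hd (show n + 1 ≤ q + k by omega)).length_le
  simp only [List.length_append] at hdist
  omega

end Epi
end

section
/- Let 1 ≤ r ≤ d_1. If 2r ≤ d_1 + 1, then a_1^r is the unique word w of length r such that w·w is a factor of 𝐬. If 2r > d_1 + 1, then there is no word w of length r such that w·w is a factor of 𝐬. -/
/-!
Write `c = a_1` and `L = d_1`. For every `n ≥ 1`, the word `s_n` is a product of blocks `c^L b` and
`c^L b c` with `b ≠ c` (`s_blocks`): for `n < k` the factors `s_0^{d_1} a_{n+1}` that end `s_n` form a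
block, for `n = k` the final `s_0 = c` extends the block `s_1` standing before it, and for `n > k` only
words `s_i` with `i ≥ 1` are concatenated.

In such a product, letters different from `c` are more than `L` apart, and no run of `c` is longer
than `L + 1` (`Blocks.spec`). If `w w` occurs and `|w| = r ≤ L`, a letter of `w` different from `c` would
be repeated at distance `r`, so `w = c^r` (`Blocks.square`); and then `2 r ≤ L + 1` (`Blocks.run`).
Conversely `c^{L+1}` occurs in `s_{k+1}` (`replicate_infix`).
-/


namespace Epi

variable {α : Type*}

/-! ### Words built from blocks -/

theorem pw_singleton (c : α) (p : ℕ) : pw [c] p = List.replicate p c := by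
  induction p with
  | zero => rfl
  | succ p ih => simp [pw, ih, List.replicate_succ]

theorem pw_succ' (x : List α) (p : ℕ) : pw x (p + 1) = pw x p ++ x := by
  induction p with
  | zero => simp [pw]
  | succ p ih => rw [pw, ih, ← List.append_assoc, ← pw, ih]

/-- The monoid of words generated by the blocks `c^L b` and `c^L b c`, with `b ≠ c`. The exponent
`e ≤ 1` in `cons` tells which of the two kinds of block comes first. -/
inductive Blocks (c : α) (L : ℕ) : List α → Prop
  | nil : Blocks c L []
  | cons (b : α) (hb : b ≠ c) (e : ℕ) (he : e ≤ 1) (y : List α) (hy : Blocks c L y) :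
      Blocks c L (List.replicate L c ++ b :: (List.replicate e c ++ y))

theorem Blocks.append {c : α} {L : ℕ} {x y : List α} (hx : Blocks c L x) (hy : Blocks c L y) :
    Blocks c L (x ++ y) := by
  induction hx with
  | nil => exact hy
  | cons b hb e he z _ ih =>
    have := Blocks.cons b hb e he _ ih
    simpa [List.append_assoc] using this

theorem Blocks.pw {c : α} {L : ℕ} {x : List α} (hx : Blocks c L x) (p : ℕ) :
    Blocks c L (pw x p) := by
  induction p with
  | zero => exact .nil
  | succ p ih => exact hx.append ih

theorem Blocks.flatten {c : α} {L : ℕ} {l : List (List α)} (h : ∀ x ∈ l, Blocks c L x) :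
    Blocks c L l.flatten := by
  induction l with
  | nil => exact .nil
  | cons x l ih =>
    rw [List.flatten_cons]
    exact (h x (by simp)).append (ih fun y hy => h y (by simp [hy]))

theorem Blocks.single {c : α} {L : ℕ} {b : α} (hb : b ≠ c) :
    Blocks c L (List.replicate L c ++ [b]) := by
  simpa using Blocks.cons (L := L) b hb 0 (by omega) [] .nil

theorem Blocks.single' {c : α} {L : ℕ} {b : α} (hb : b ≠ c) :
    Blocks c L (List.replicate L c ++ [b] ++ [c]) := by
  simpa using Blocks.cons (L := L) b hb 1 (by omega) [] .nil

/-- In a product of blocks, every maximal run of `c` other than the final one has length `L` or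
`L + 1`. The four conjuncts say that the first `L` letters are `c`; that the letter after them is
not `c`; that letters different from `c` are more than `L` apart; and that every window of length
`L + 2` holds a letter different from `c`. The first two carry the induction. -/
theorem Blocks.spec {c : α} {L : ℕ} {x : List α} (hx : Blocks c L x) :
    (∀ i p, i < L → x[i]? = some p → p = c) ∧
    (x ≠ [] → ∃ p, p ≠ c ∧ x[L]? = some p) ∧
    (∀ i j p q, i < j → x[i]? = some p → x[j]? = some q → p ≠ c → q ≠ c → i + L < j) ∧
    (∀ i, i + (L + 2) ≤ x.length → ∃ j p, i ≤ j ∧ j < i + (L + 2) ∧ x[j]? = some p ∧ p ≠ c) := by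
  induction hx with
  | nil => simp
  | cons b hb e he y hy ih =>
    obtain ⟨h1, h2, h3, h4⟩ := ih
    set x := List.replicate L c ++ b :: (List.replicate e c ++ y) with hxdef
    have gA : ∀ i, i < L → x[i]? = some c := by
      intro i hi
      simp [hxdef, List.getElem?_append, hi]
    have gB : x[L]? = some b := by
      simp [hxdef]
    have gC : ∀ i, L < i → i < L + 1 + e → x[i]? = some c := by
      intro i hi hi'
      obtain ⟨t, rfl⟩ : ∃ t, i = L + 1 + t := ⟨i - (L + 1), by omega⟩
      have : L + 1 + t - L = t + 1 := by omega
      rw [hxdef, List.getElem?_append_right (by simp; omega), List.length_replicate, this,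
        List.getElem?_cons_succ, List.getElem?_append_left (by simp; omega),
        List.getElem?_replicate, if_pos (by omega)]
    have gD : ∀ t, x[L + 1 + e + t]? = y[t]? := by
      intro t
      have h6 : L + 1 + e + t - L = (e + t) + 1 := by omega
      have h5 : ¬ (L + 1 + e + t < L) := by omega
      simp [hxdef, List.getElem?_append, h5, h6]
    have hlen : x.length = L + 1 + e + y.length := by
      simp [hxdef]; omega
    have hcase : ∀ i p, x[i]? = some p → p ≠ c →
        i = L ∨ ∃ t, i = L + 1 + e + t ∧ y[t]? = some p := by
      intro i p hi hp
      rcases lt_trichotomy i L with h | h | h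
      · rw [gA i h] at hi; simp at hi; exact absurd hi.symm hp
      · exact .inl h
      · by_cases h' : i < L + 1 + e
        · rw [gC i h h'] at hi; simp at hi; exact absurd hi.symm hp
        · refine .inr ⟨i - (L + 1 + e), by omega, ?_⟩
          rw [← gD, ← hi]; congr 1; omega
    refine ⟨?_, ?_, ?_, ?_⟩
    · intro i p hi h
      rw [gA i hi] at h; simpa using h.symm
    · exact fun _ => ⟨b, hb, gB⟩
    · intro i j p q hij hi hj hp hq
      rcases hcase i p hi hp with rfl | ⟨t, rfl, ht⟩ <;>
        rcases hcase j q hj hq with rfl | ⟨u, rfl, hu⟩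
      · omega
      · have : ¬ u < i := fun h => hq (h1 u q h hu)
        omega
      · omega
      · have := h3 t u p q (by omega) ht hu hp hq
        omega
    · intro i hi
      rcases Nat.lt_or_ge L i with h | h
      · by_cases h' : i < L + 1 + e
        · -- the window starts at the extra letter `c`, and reaches the end of the first run of `y`
          have hy0 : y ≠ [] := by
            rintro rfl
            simp at hlen; omega
          obtain ⟨p, hp, hpy⟩ := h2 hy0
          exact ⟨L + 1 + e + L, p, by omega, by omega, by rw [gD, hpy], hp⟩
        · obtain ⟨j, p, hj1, hj2, hj3, hp⟩ := h4 (i - (L + 1 + e)) (by omega)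
          exact ⟨L + 1 + e + j, p, by omega, by omega, by rw [gD, hj3], hp⟩
      · exact ⟨L, b, h, by omega, gB, hb⟩

/-! ### Squares in products of blocks -/

theorem Blocks.square {c : α} {L : ℕ} {x : List α} (hx : Blocks c L x) {w : List α}
    (hw : w.length ≤ L) (h : w ++ w <:+: x) : w = List.replicate w.length c := by
  obtain ⟨u, v, rfl⟩ := h
  rw [List.eq_replicate_iff]
  refine ⟨rfl, fun b hb => ?_⟩
  by_contra hbc
  obtain ⟨i, hi, rfl⟩ := List.mem_iff_getElem.1 hb
  have := hx.spec.2.2.1 (u.length + i) (u.length + (w.length + i)) w[i] w[i] (by omega)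
    (by simp [List.getElem?_append, hi])
    (by simp [List.getElem?_append, hi]) hbc hbc
  omega

theorem Blocks.run {c : α} {L : ℕ} {x : List α} (hx : Blocks c L x) {p : ℕ}
    (h : List.replicate p c <:+: x) : p ≤ L + 1 := by
  obtain ⟨u, v, rfl⟩ := h
  by_contra hp
  obtain ⟨j, q, h1, h2, h3, h4⟩ := hx.spec.2.2.2 u.length (by simp; omega)
  obtain ⟨t, rfl⟩ : ∃ t, j = u.length + t := ⟨j - u.length, by omega⟩
  have ht : t < p := by omega
  simp [List.getElem?_append, ht] at h3
  exact h4 h3.symm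

/-! ### The words `s_n` as products of blocks -/

theorem S_of_lt {k : ℕ} (a : ℕ → α) (d : ℕ → ℕ) {m : ℕ} (hm : m < k) :
    S k a d m = [a ((m + 1) % k + 1)] := by
  rw [S, dif_pos (by omega)]

theorem S_of_ge {k : ℕ} (hk : 2 ≤ k) (a : ℕ → α) (d : ℕ → ℕ) {m : ℕ} (hm : k ≤ m) :
    S k a d m = ((List.range (k - 1)).map
      (fun j => pw (S k a d (m - 1 - j)) (d (m + 1 - k - j)))).flatten ++ S k a d (m - k) := by
  rw [S, dif_neg (by omega), max_eq_left (by omega)]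

theorem flatten_range_of_nil (f : ℕ → List α) (t e : ℕ) (h : ∀ j, t < j → f j = []) :
    ((List.range (t + 1 + e)).map f).flatten = ((List.range t).map f).flatten ++ f t := by
  induction e with
  | zero => simp [List.range_succ]
  | succ e ih => rw [← Nat.add_assoc, List.range_succ]; simp [ih, h (t + 1 + e) (by omega)]

/-- For `1 ≤ n ≤ k - 1`, the factors `s_0^{d_1}` and `a_{n+1}` that end `s_n` form one block. -/
theorem S_low {k : ℕ} (hk : 2 ≤ k) (a : ℕ → α) (d : ℕ → ℕ) (hd0 : d 0 = 0) {n : ℕ}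
    (hn : n + 1 < k) :
    S k a d (k + n) = ((List.range n).map
      (fun j => pw (S k a d (k + n - 1 - j)) (d (n + 1 - j)))).flatten ++
        (List.replicate (d 1) (a 1) ++ [a (n + 2)]) := by
  rw [S_of_ge hk a d (by omega)]
  have hk' : k - 1 = n + 1 + (k - 2 - n) := by omega
  have e1 : ∀ j, k + n + 1 - k - j = n + 1 - j := by intro j; omega
  simp only [e1]
  nth_rewrite 1 [hk']
  rw [flatten_range_of_nil]
  · have e2 : k + n - 1 - n = k - 1 := by omega
    have e3 : n + 1 - n = 1 := by omega
    have e4 : k + n - k = n := by omega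
    rw [e2, e3, e4, S_of_lt a d (by omega : k - 1 < k), S_of_lt a d (by omega : n < k),
      Nat.sub_add_cancel (by omega), Nat.mod_self, Nat.mod_eq_of_lt hn, pw_singleton]
    simp
  · intro j hj
    have : n + 1 - j = 0 := by omega
    rw [this, hd0, pw]

theorem S_k {k : ℕ} (hk : 2 ≤ k) (a : ℕ → α) (d : ℕ → ℕ) (hd0 : d 0 = 0) :
    S k a d k = List.replicate (d 1) (a 1) ++ [a 2] := by
  simpa using S_low hk a d hd0 (n := 0) (by omega)

/-- The word `s_k` ends in `s_1 s_0`, because `d_2` is positive. -/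
theorem S_mid {k : ℕ} (hk : 2 ≤ k) (a : ℕ → α) (d : ℕ → ℕ) (hd0 : d 0 = 0) (hd2 : 1 ≤ d 2) :
    S k a d (2 * k - 1) = (((List.range (k - 2)).map
      (fun j => pw (S k a d (2 * k - 1 - 1 - j)) (d (k - j)))).flatten ++
        pw (S k a d k) (d 2 - 1)) ++ (List.replicate (d 1) (a 1) ++ [a 2] ++ [a 1]) := by
  rw [S_of_ge hk a d (by omega)]
  have hk' : k - 1 = k - 2 + 1 := by omega
  have e1 : ∀ j, 2 * k - 1 + 1 - k - j = k - j := by intro j; omega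
  have e2 : 2 * k - 1 - k = k - 1 := by omega
  have e3 : 2 * k - 1 - 1 - (k - 2) = k := by omega
  have e4 : k - (k - 2) = 2 := by omega
  simp only [e1, e2]
  rw [S_of_lt a d (by omega : k - 1 < k), Nat.sub_add_cancel (by omega), Nat.mod_self]
  nth_rewrite 1 [hk']
  rw [List.range_succ]
  simp only [List.map_append, List.flatten_append, List.map_cons, List.map_nil, e3, e4,
    List.flatten_cons, List.flatten_nil, List.append_nil]
  obtain ⟨p, hp⟩ : ∃ p, d 2 = p + 1 := ⟨d 2 - 1, by omega⟩
  rw [hp, pw_succ', Nat.add_sub_cancel]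
  simp [S_k hk a d hd0]

theorem S_blocks {k : ℕ} (hk : 2 ≤ k) (a : ℕ → α)
    (ha : ∀ i, 2 ≤ i → i ≤ k → a i ≠ a 1) (d : ℕ → ℕ) (hd0 : d 0 = 0) (hd2 : 1 ≤ d 2)
    (m : ℕ) (hm : k ≤ m) : Blocks (a 1) (d 1) (S k a d m) := by
  induction m using Nat.strong_induction_on with
  | _ m ih =>
    rcases Nat.lt_trichotomy m (2 * k - 1) with h | h | h
    · obtain ⟨n, rfl⟩ : ∃ n, m = k + n := ⟨m - k, by omega⟩
      rw [S_low hk a d hd0 (by omega)]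
      refine (Blocks.flatten fun x hx => ?_).append (.single (ha _ (by omega) (by omega)))
      obtain ⟨j, hj, rfl⟩ := List.mem_map.1 hx
      rw [List.mem_range] at hj
      exact (ih _ (by omega) (by omega)).pw _
    · subst h
      rw [S_mid hk a d hd0 hd2]
      refine ((Blocks.flatten fun x hx => ?_).append ((ih _ (by omega) le_rfl).pw _)).append
        (.single' (ha _ le_rfl hk))
      obtain ⟨j, hj, rfl⟩ := List.mem_map.1 hx
      rw [List.mem_range] at hj
      exact (ih _ (by omega) (by omega)).pw _
    · rw [S_of_ge hk a d hm]
      refine (Blocks.flatten fun x hx => ?_).append (ih _ (by omega) (by omega))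
      obtain ⟨j, hj, rfl⟩ := List.mem_map.1 hx
      rw [List.mem_range] at hj
      exact (ih _ (by omega) (by omega)).pw _

theorem s_blocks {k : ℕ} (hk : 2 ≤ k) (a : ℕ → α)
    (ha : ∀ i, 2 ≤ i → i ≤ k → a i ≠ a 1) (d : ℕ → ℕ) (hd0 : d 0 = 0) (hd2 : 1 ≤ d 2)
    {n : ℕ} (hn : 1 ≤ n) : Blocks (a 1) (d 1) (s k a d n) :=
  S_blocks hk a ha d hd0 hd2 _ (by omega)

/-- The word `s_{k+1}` contains `a_1^{d_1 + 1}`: it starts with `s_k`, which ends in `a_1`, and what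
follows is a nonempty product of blocks, hence starts with `a_1^{d_1}`. -/
theorem replicate_infix {k : ℕ} (hk : 2 ≤ k) (a : ℕ → α)
    (ha : ∀ i, 2 ≤ i → i ≤ k → a i ≠ a 1) (d : ℕ → ℕ) (hd0 : d 0 = 0)
    (hd : ∀ i, 1 ≤ i → 1 ≤ d i) :
    List.replicate (d 1 + 1) (a 1) <:+: s k a d (k + 1) := by
  have hB := S_blocks hk a ha d hd0 (hd 2 (by omega))
  obtain ⟨Z, hZ⟩ : ∃ Z, S k a d (2 * k - 1) = Z ++ [a 1] :=
    ⟨_, by rw [S_mid hk a d hd0 (hd 2 (by omega)), ← List.append_assoc]⟩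
  obtain ⟨Y, hY, hY0, hYS⟩ : ∃ Y, Blocks (a 1) (d 1) Y ∧ Y ≠ [] ∧
      s k a d (k + 1) = S k a d (2 * k - 1) ++ Y := by
    obtain ⟨t, rfl⟩ : ∃ t, k = t + 2 := ⟨k - 2, by omega⟩
    obtain ⟨p, hp⟩ : ∃ p, d (t + 3) = p + 1 := ⟨d (t + 3) - 1, by have := hd (t + 3); omega⟩
    have e0 : t + 2 + 1 + (t + 2 - 1) = 2 * (t + 2) := by omega
    have e1 : t + 2 - 1 = t + 1 := by omega
    have e2 : 2 * (t + 2) - (t + 2) = t + 2 := by omega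
    have e3 : 2 * (t + 2) + 1 - (t + 2) - 0 = t + 3 := by omega
    rw [s, e0, S_of_ge hk a d (by omega), e1, List.range_succ_eq_map, List.map_cons,
      List.flatten_cons, e2, e3, hp, Nat.sub_zero, pw, List.append_assoc, List.append_assoc]
    refine ⟨_, ?_, ?_, rfl⟩
    · refine ((hB _ (by omega)).pw _).append ((Blocks.flatten fun x hx => ?_).append
        (hB _ le_rfl))
      rw [List.map_map] at hx
      obtain ⟨j, hj, rfl⟩ := List.mem_map.1 hx
      rw [List.mem_range] at hj
      exact (hB _ (by simp only [Nat.succ_eq_add_one]; omega)).pw _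
    · rw [S_k hk a d hd0]; simp
  cases hY with
  | nil => exact absurd rfl hY0
  | cons b hb e he y hy =>
    refine ⟨Z, b :: (List.replicate e (a 1) ++ y), ?_⟩
    rw [hYS, hZ, List.replicate_succ]
    simp

/-! ### Squares of short words -/

theorem stmt16 {α : Type*} (k : ℕ) (hk : 2 ≤ k) (a : ℕ → α)
    (ha : ∀ i j, 1 ≤ i → i ≤ k → 1 ≤ j → j ≤ k → a i = a j → i = j)
    (d : ℕ → ℕ) (hd0 : d 0 = 0) (hd : ∀ i, 1 ≤ i → 1 ≤ d i) (r : ℕ) (hr1 : 1 ≤ r) (hrd : r ≤ d 1) :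
    (2 * r ≤ d 1 + 1 →
      FactorS k a d (pw [a 1] r ++ pw [a 1] r) ∧
        ∀ w : List α, w.length = r → FactorS k a d (w ++ w) → w = pw [a 1] r) ∧
    (d 1 + 1 < 2 * r →
      ∀ w : List α, w.length = r → ¬ FactorS k a d (w ++ w)) := by
  have ha' : ∀ i, 2 ≤ i → i ≤ k → a i ≠ a 1 := fun i h1 h2 h => by
    have := ha i 1 (by omega) h2 le_rfl (by omega) h
    omega
  -- the word `s_0` is a single letter, too short to contain a square
  have hN : ∀ w : List α, w.length = r → FactorS k a d (w ++ w) →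
      ∃ x, Blocks (a 1) (d 1) x ∧ w ++ w <:+: x := by
    rintro w hw ⟨N, hN⟩
    rcases Nat.eq_zero_or_pos N with rfl | hpos
    · have := hN.length_le
      rw [s, S_of_lt a d (by omega)] at this
      simp at this
      omega
    · exact ⟨_, s_blocks hk a ha' d hd0 (hd 2 (by omega)) hpos, hN⟩
  simp only [pw_singleton]
  refine ⟨fun h => ⟨⟨k + 1, ?_⟩, ?_⟩, ?_⟩
  · rw [List.replicate_append_replicate]
    refine List.IsInfix.trans ?_ (replicate_infix hk a ha' d hd0 hd)
    refine ⟨[], List.replicate (d 1 + 1 - (r + r)) (a 1), ?_⟩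
    rw [List.nil_append, List.replicate_append_replicate]
    congr 1
    omega
  · intro w hw hf
    obtain ⟨x, hx, hi⟩ := hN w hw hf
    have := hx.square (by omega) hi
    rwa [hw] at this
  · intro h w hw hf
    obtain ⟨x, hx, hi⟩ := hN w hw hf
    rw [hx.square (by omega) hi, List.replicate_append_replicate] at hi
    have := hx.run hi
    omega


end Epi
end
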